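/- Define on W the operators J₊ := i T₊T̃₊, J₋ := −i T₋T̃₋, and J₀ := −(1/2)(T₋T̃₊ + T₊T̃₋). Then on each basis vector: J₀|j,m⟩ = m|j,m⟩, J₊|j,m⟩ = C₊(j,m)|j,m+1⟩ and J₋|j,m⟩ = C₋(j,m)|j,m−1⟩, where C₊(j,m) = i·√(j−m)·√(j+m+1) and C₋(j,m) = i·√(j+m)·√(j−m+1); consequently [J₀, J_±] = ±J_± and [J₊, J₋] = −2J₀, i.e. these operators realize the sl(2,ℝ) generator action on each subspace spanned by {|j,m⟩ : m fixed parity class} (generalized Jordan–Schwinger representation). -/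

import Mathlib

/-!
All operators are determined by their values on the basis vectors |j,m⟩. In J₀ the two square
roots produced by T₋T̃₊, and likewise by T₊T̃₋, have the same argument, so `csqrt_mul_self` gives
J₀|j,m⟩ = −½((j−m) − (j+m))|j,m⟩ = m|j,m⟩, with no branch ambiguity. The formulas for J_± are
direct substitutions. Since J_± shift m by ±1, [J₀,J_±] = ±J_± is immediate, and [J₊,J₋] = −2J₀
reduces to −(j+m)(j−m+1) + (j−m)(j+m+1) = −2m, where again the roots occur in equal pairs.
-/

/-!
The generalized Jordan–Schwinger construction for sl(2,ℝ).

Fix ε (encoded by `E : ℂ` with `E = 0 ∨ E = 1/2`) and j₀ ∈ ℂ. The space W has basis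
{|j,m⟩ : j ∈ j₀ + (1/2)ℤ, m − ε − (j − j₀) ∈ ℤ}, indexed by `(a,b) : ℤ × ℤ` via
j = j₀ + a/2, m = ε + a/2 + b; `single (a,b) 1` represents |j₀+a/2, ε+a/2+b⟩.
-/

noncomputable section

/-- Principal branch of the complex square root. -/
def csqrt (z : ℂ) : ℂ := z ^ ((1 : ℂ) / 2)

/-- C₊(j,m) = i √(j-m) √(j+m+1). -/
def Cp (j m : ℂ) : ℂ := Complex.I * csqrt (j - m) * csqrt (j + m + 1)

/-- C₋(j,m) = i √(j+m) √(j-m+1). -/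
def Cm (j m : ℂ) : ℂ := Complex.I * csqrt (j + m) * csqrt (j - m + 1)

/-- The Jordan–Schwinger space W. -/
abbrev WJS := (ℤ × ℤ) →₀ ℂ

/-- j = j₀ + a/2. -/
def jl (j₀ : ℂ) (a : ℤ) : ℂ := j₀ + (a : ℂ) / 2

/-- m = ε + a/2 + b. -/
def ml (E : ℂ) (a b : ℤ) : ℂ := E + (a : ℂ) / 2 + (b : ℂ)

/-- T₋ |j,m⟩ = √(j−m+1) |j+1/2, m−1/2⟩. -/
def Tm (j₀ E : ℂ) : WJS →ₗ[ℂ] WJS :=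
  Finsupp.lsum ℂ fun p => LinearMap.toSpanSingleton ℂ WJS
    (Finsupp.single (p.1 + 1, p.2 - 1) (csqrt (jl j₀ p.1 - ml E p.1 p.2 + 1)))

/-- T₊ |j,m⟩ = √(j+m+1) |j+1/2, m+1/2⟩. -/
def Tp (j₀ E : ℂ) : WJS →ₗ[ℂ] WJS :=
  Finsupp.lsum ℂ fun p => LinearMap.toSpanSingleton ℂ WJS
    (Finsupp.single (p.1 + 1, p.2) (csqrt (jl j₀ p.1 + ml E p.1 p.2 + 1)))

/-- T̃₋ |j,m⟩ = −√(j+m) |j−1/2, m−1/2⟩. -/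
def Ttm (j₀ E : ℂ) : WJS →ₗ[ℂ] WJS :=
  Finsupp.lsum ℂ fun p => LinearMap.toSpanSingleton ℂ WJS
    (Finsupp.single (p.1 - 1, p.2) (-csqrt (jl j₀ p.1 + ml E p.1 p.2)))

/-- T̃₊ |j,m⟩ = √(j−m) |j−1/2, m+1/2⟩. -/
def Ttp (j₀ E : ℂ) : WJS →ₗ[ℂ] WJS :=
  Finsupp.lsum ℂ fun p => LinearMap.toSpanSingleton ℂ WJS
    (Finsupp.single (p.1 - 1, p.2 + 1) (csqrt (jl j₀ p.1 - ml E p.1 p.2)))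

/-- J₊ := i T₊T̃₊. -/
def JSp (j₀ E : ℂ) : WJS →ₗ[ℂ] WJS := Complex.I • (Tp j₀ E ∘ₗ Ttp j₀ E)

/-- J₋ := −i T₋T̃₋. -/
def JSm (j₀ E : ℂ) : WJS →ₗ[ℂ] WJS := -Complex.I • (Tm j₀ E ∘ₗ Ttm j₀ E)

/-- J₀ := −(1/2)(T₋T̃₊ + T₊T̃₋). -/
def JS0 (j₀ E : ℂ) : WJS →ₗ[ℂ] WJS :=
  -((1 : ℂ) / 2) • (Tm j₀ E ∘ₗ Ttp j₀ E + Tp j₀ E ∘ₗ Ttm j₀ E)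

theorem csqrt_mul_self (z : ℂ) : csqrt z * csqrt z = z := by
  have h : csqrt z ^ 2 = z := by simp [csqrt]
  rw [← sq, h]

theorem Tm_single (j₀ E : ℂ) (a b : ℤ) (c : ℂ) :
    Tm j₀ E (Finsupp.single (a, b) c) =
      Finsupp.single (a + 1, b - 1) (c * csqrt (jl j₀ a - ml E a b + 1)) := by
  simp [Tm]

theorem Tp_single (j₀ E : ℂ) (a b : ℤ) (c : ℂ) :
    Tp j₀ E (Finsupp.single (a, b) c) =
      Finsupp.single (a + 1, b) (c * csqrt (jl j₀ a + ml E a b + 1)) := by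
  simp [Tp]

theorem Ttm_single (j₀ E : ℂ) (a b : ℤ) (c : ℂ) :
    Ttm j₀ E (Finsupp.single (a, b) c) =
      Finsupp.single (a - 1, b) (c * -csqrt (jl j₀ a + ml E a b)) := by
  simp [Ttm]

theorem Ttp_single (j₀ E : ℂ) (a b : ℤ) (c : ℂ) :
    Ttp j₀ E (Finsupp.single (a, b) c) =
      Finsupp.single (a - 1, b + 1) (c * csqrt (jl j₀ a - ml E a b)) := by
  simp [Ttp]

theorem JS0_single (j₀ E : ℂ) (a b : ℤ) (c : ℂ) :
    JS0 j₀ E (Finsupp.single (a, b) c) = Finsupp.single (a, b) (c * ml E a b) := by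
  have h1 : jl j₀ (a - 1) - ml E (a - 1) (b + 1) + 1 = jl j₀ a - ml E a b := by
    simp only [jl, ml]; push_cast; ring
  have h2 : jl j₀ (a - 1) + ml E (a - 1) b + 1 = jl j₀ a + ml E a b := by
    simp only [jl, ml]; push_cast; ring
  simp only [JS0, LinearMap.smul_apply, LinearMap.add_apply, LinearMap.comp_apply, Ttp_single,
    Ttm_single, Tm_single, Tp_single, sub_add_cancel, add_sub_cancel_right, h1, h2,
    ← Finsupp.single_add, Finsupp.smul_single, smul_eq_mul]
  congr 1
  linear_combination (-(1 / 2) * c) * csqrt_mul_self (jl j₀ a - ml E a b) +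
    (1 / 2 * c) * csqrt_mul_self (jl j₀ a + ml E a b)

theorem JSp_single (j₀ E : ℂ) (a b : ℤ) (c : ℂ) :
    JSp j₀ E (Finsupp.single (a, b) c) =
      Finsupp.single (a, b + 1) (c * Cp (jl j₀ a) (ml E a b)) := by
  have h : jl j₀ (a - 1) + ml E (a - 1) (b + 1) + 1 = jl j₀ a + ml E a b + 1 := by
    simp only [jl, ml]; push_cast; ring
  simp only [JSp, LinearMap.smul_apply, LinearMap.comp_apply, Ttp_single, Tp_single,
    sub_add_cancel, h, Finsupp.smul_single, smul_eq_mul, Cp]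
  congr 1
  ring

theorem JSm_single (j₀ E : ℂ) (a b : ℤ) (c : ℂ) :
    JSm j₀ E (Finsupp.single (a, b) c) =
      Finsupp.single (a, b - 1) (c * Cm (jl j₀ a) (ml E a b)) := by
  have h : jl j₀ (a - 1) - ml E (a - 1) b + 1 = jl j₀ a - ml E a b + 1 := by
    simp only [jl, ml]; push_cast; ring
  simp only [JSm, LinearMap.smul_apply, LinearMap.comp_apply, Ttm_single, Tm_single,
    sub_add_cancel, h, Finsupp.smul_single, smul_eq_mul, Cm]
  congr 1
  ring

theorem ml_add_one (E : ℂ) (a b : ℤ) : ml E a (b + 1) = ml E a b + 1 := by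
  simp only [ml]; push_cast; ring

theorem ml_sub_one (E : ℂ) (a b : ℤ) : ml E a (b - 1) = ml E a b - 1 := by
  simp only [ml]; push_cast; ring

/-- The scalar by which J₊J₋ acts on |j,m⟩. -/
theorem Cm_mul_Cp (j m : ℂ) : Cm j m * Cp j (m - 1) = -((j + m) * (j - m + 1)) := by
  have h1 : j - (m - 1) = j - m + 1 := by ring
  have h2 : j + (m - 1) + 1 = j + m := by ring
  rw [Cm, Cp, h1, h2]
  linear_combination (csqrt (j + m) ^ 2 * csqrt (j - m + 1) ^ 2) * Complex.I_mul_I -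
    csqrt (j + m) ^ 2 * csqrt_mul_self (j - m + 1) - (j - m + 1) * csqrt_mul_self (j + m)

/-- The scalar by which J₋J₊ acts on |j,m⟩. -/
theorem Cp_mul_Cm (j m : ℂ) : Cp j m * Cm j (m + 1) = -((j - m) * (j + m + 1)) := by
  have h1 : j - (m + 1) + 1 = j - m := by ring
  have h2 : j + (m + 1) = j + m + 1 := by ring
  rw [Cm, Cp, h1, h2]
  linear_combination (csqrt (j - m) ^ 2 * csqrt (j + m + 1) ^ 2) * Complex.I_mul_I -
    csqrt (j - m) ^ 2 * csqrt_mul_self (j + m + 1) - (j + m + 1) * csqrt_mul_self (j - m)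

/-- The operators J₀ = −(1/2)(T₋T̃₊ + T₊T̃₋), J₊ = iT₊T̃₊, J₋ = −iT₋T̃₋
act on each basis vector by J₀|j,m⟩ = m|j,m⟩, J_±|j,m⟩ = C_±(j,m)|j,m±1⟩, and hence satisfy
[J₀,J_±] = ±J_±, [J₊,J₋] = −2J₀: they realize the sl(2,ℝ) generator action
(generalized Jordan–Schwinger representation). -/
theorem jordan_schwinger (j₀ E : ℂ) (hE : E = 0 ∨ E = 1 / 2) :
    (∀ a b : ℤ,
      JS0 j₀ E (Finsupp.single (a, b) 1) = ml E a b • Finsupp.single (a, b) 1) ∧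
    (∀ a b : ℤ,
      JSp j₀ E (Finsupp.single (a, b) 1) =
        Cp (jl j₀ a) (ml E a b) • Finsupp.single (a, b + 1) 1) ∧
    (∀ a b : ℤ,
      JSm j₀ E (Finsupp.single (a, b) 1) =
        Cm (jl j₀ a) (ml E a b) • Finsupp.single (a, b - 1) 1) ∧
    (JS0 j₀ E ∘ₗ JSp j₀ E - JSp j₀ E ∘ₗ JS0 j₀ E = JSp j₀ E) ∧
    (JS0 j₀ E ∘ₗ JSm j₀ E - JSm j₀ E ∘ₗ JS0 j₀ E = -JSm j₀ E) ∧
    (JSp j₀ E ∘ₗ JSm j₀ E - JSm j₀ E ∘ₗ JSp j₀ E = (-2 : ℂ) • JS0 j₀ E) := by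
  refine ⟨fun a b => ?_, fun a b => ?_, fun a b => ?_, ?_, ?_, ?_⟩
  · simp [JS0_single]
  · simp [JSp_single]
  · simp [JSm_single]
  · refine Finsupp.lhom_ext fun ⟨a, b⟩ c => ?_
    simp only [LinearMap.sub_apply, LinearMap.comp_apply, JS0_single, JSp_single, ml_add_one,
      ← Finsupp.single_sub]
    congr 1
    ring
  · refine Finsupp.lhom_ext fun ⟨a, b⟩ c => ?_
    simp only [LinearMap.sub_apply, LinearMap.neg_apply, LinearMap.comp_apply, JS0_single,
      JSm_single, ml_sub_one, ← Finsupp.single_sub, ← Finsupp.single_neg]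
    congr 1
    ring
  · refine Finsupp.lhom_ext fun ⟨a, b⟩ c => ?_
    simp only [LinearMap.sub_apply, LinearMap.smul_apply, LinearMap.comp_apply, JS0_single,
      JSp_single, JSm_single, ml_add_one, ml_sub_one, sub_add_cancel, add_sub_cancel_right,
      ← Finsupp.single_sub, Finsupp.smul_single, smul_eq_mul]
    congr 1
    linear_combination c * Cm_mul_Cp (jl j₀ a) (ml E a b) - c * Cp_mul_Cm (jl j₀ a) (ml E a b)

end
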